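/- The vector field K is timelike (Lemma 4.5): There exists ā > 0, depending only on M, such that if |a| < ā, then the vector field K = (t² + r_*² + 1)·T_χ + 2t·r_*·Ñ²·∂_{r_*} is timelike with respect to the Kerr metric g at every point of the exterior Kerr region, i.e. g(K,K) < 0 everywhere. -/

import Mathlib

/-!
Write `T_χ = T_⊥ + (χ ω_H - ω) ∂_φ` with `ω = 2aMr/Π`; since `T_⊥` is orthogonal to `∂_φ`, and
`Ñ² = (r² + a²)²/Π`, one finds (`quadForm_K`)
`g(K, K) = -(ΣΔ/Π) (A² (1 - ε) - B² Ñ²)`, where `A = t² + r_*² + 1`, `B = 2 t r_*` and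
`ε = (Π (χ ω_H - ω))² sin²θ / (Σ² Δ)`.

Maximising `B/A` over `t` gives `B² (r_*² + 1) ≤ A² r_*²`, so `K` is timelike as soon as
`r_*² (Ñ² - 1) + ε (r_*² + 1) < 1` (`criterion`), a condition that no longer involves `t`.
Both `Ñ² - 1 = a² sin²θ Δ/Π` and `ε` carry a factor `a²`, so it suffices to bound the cofactors
uniformly in `r` and `a`. Two estimates, for `|a| ≤ M/2`, do this: `r_*² (r - r₊) ≤ 648 r³`
(`rstar_bound`: linear growth at infinity, logarithmic growth at the horizon), and
`|Π (χ ω_H - ω)| ≤ 800 |a| r (r - r₊)` (`mismatch_bound`: at the horizon `χ = 1` and `ω = ω_H`,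
while for `r ≥ 11M` only the term `2aMr` is left). `small_condition` combines them.
-/

noncomputable section

open MeasureTheory Filter Topology

namespace KerrPaper

abbrev V4 : Type := Fin 4 → ℝ

/-- Partial derivative in the `i`-th coordinate (coordinates: 0 = t, 1 = r, 2 = θ, 3 = φ). -/
def pd (i : Fin 4) (ψ : V4 → ℝ) : V4 → ℝ :=
  fun x => deriv (fun s => ψ (Function.update x i s)) (x i)

def rplus (M a : ℝ) : ℝ := M + Real.sqrt (M ^ 2 - a ^ 2)

def Δk (M a r : ℝ) : ℝ := r ^ 2 - 2 * M * r + a ^ 2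

def SigK (a r θ : ℝ) : ℝ := r ^ 2 + a ^ 2 * Real.cos θ ^ 2

def PiK (M a r θ : ℝ) : ℝ := (r ^ 2 + a ^ 2) ^ 2 - a ^ 2 * Real.sin θ ^ 2 * Δk M a r

def ωH (M a : ℝ) : ℝ := a / (rplus M a ^ 2 + a ^ 2)

/-- The exterior region in Boyer–Lindquist coordinates `(t, r, θ, φ)`. -/
def ext (M a : ℝ) : Set V4 := {x | rplus M a < x 1 ∧ 0 < x 2 ∧ x 2 < Real.pi}

/-- The Carter operator. -/
def carterQ (a : ℝ) (ψ : V4 → ℝ) : V4 → ℝ :=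
  fun x =>
    (Real.sin (x 2))⁻¹ * pd 2 (fun y => Real.sin (y 2) * pd 2 ψ y) x +
      Real.cos (x 2) ^ 2 / Real.sin (x 2) ^ 2 * pd 3 (pd 3 ψ) x +
      a ^ 2 * Real.sin (x 2) ^ 2 * pd 0 (pd 0 ψ) x

/-- The operator ℛ(r; M, a; ∂_t, ∂_φ, Q). -/
def curlyR (M a : ℝ) (ψ : V4 → ℝ) : V4 → ℝ :=
  fun x =>
    -((x 1 ^ 2 + a ^ 2) ^ 2) * pd 0 (pd 0 ψ) x - 4 * a * M * x 1 * pd 0 (pd 3 ψ) x +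
      (Δk M a (x 1) - a ^ 2) * pd 3 (pd 3 ψ) x + Δk M a (x 1) * carterQ a ψ x

/-- The (rescaled) wave operator □ = Σ ∇^α∇_α. -/
def box (M a : ℝ) (ψ : V4 → ℝ) : V4 → ℝ :=
  fun x => pd 1 (fun y => Δk M a (y 1) * pd 1 ψ y) x + (Δk M a (x 1))⁻¹ * curlyR M a ψ x

/-- ψ is a smooth solution of the wave equation on the exterior region. -/
def IsWaveSol (M a : ℝ) (ψ : V4 → ℝ) : Prop :=
  ContDiffOn ℝ (⊤ : ℕ∞) ψ (ext M a) ∧ ∀ x ∈ ext M a, box M a ψ x = 0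

/-- G^{αβ} = Σ g^{αβ}, the rescaled inverse Kerr metric in BL coordinates. -/
def Ginv (M a r θ : ℝ) : Matrix (Fin 4) (Fin 4) ℝ :=
  !![-(PiK M a r θ) / Δk M a r, 0, 0, -(2 * a * M * r) / Δk M a r;
     0, Δk M a r, 0, 0;
     0, 0, 1, 0;
     -(2 * a * M * r) / Δk M a r, 0, 0,
       (Δk M a r - a ^ 2 * Real.sin θ ^ 2) / (Δk M a r * Real.sin θ ^ 2)]

/-- The momentum P_X^α[ψ]. -/
def momentum (M a : ℝ) (X : V4 → Fin 4 → ℝ) (ψ : V4 → ℝ) (α : Fin 4) : V4 → ℝ :=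
  fun x =>
    -(∑ γ, Ginv M a (x 1) (x 2) α γ * pd γ ψ x) * (∑ β, pd β ψ x * X x β) +
      (1 / 2) * X x α * ∑ ρ, ∑ σ, Ginv M a (x 1) (x 2) ρ σ * pd ρ ψ x * pd σ ψ x

/-- Parameter domain of a constant-t slice: (r, θ, φ). -/
def sliceSet (M a : ℝ) : Set (ℝ × ℝ × ℝ) :=
  Set.Ioi (rplus M a) ×ˢ Set.Ioo 0 Real.pi ×ˢ Set.Ioo 0 (2 * Real.pi)

def pt (t : ℝ) (p : ℝ × ℝ × ℝ) : V4 := ![t, p.1, p.2.1, p.2.2]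

/-- The energy E_X[ψ](t) = ∫ P_X^t[ψ] sinθ dr dθ dφ. -/
def energy (M a : ℝ) (X : V4 → Fin 4 → ℝ) (ψ : V4 → ℝ) (t : ℝ) : ℝ :=
  ∫ p in sliceSet M a, momentum M a X ψ 0 (pt t p) * Real.sin p.2.1

/-- χ is a smooth nonincreasing cutoff, ≡ 1 for r ≤ 10M and ≡ 0 for r ≥ 11M. -/
def IsCutoff (M : ℝ) (χ : ℝ → ℝ) : Prop :=
  ContDiff ℝ (⊤ : ℕ∞) χ ∧ Antitone χ ∧ (∀ r ≤ 10 * M, χ r = 1) ∧ ∀ r, 11 * M ≤ r → χ r = 0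

/-- The blended vector field T_χ = ∂_t + χ ω_H ∂_φ. -/
def Tchi (M a : ℝ) (χ : ℝ → ℝ) : V4 → Fin 4 → ℝ :=
  fun x => ![1, 0, 0, χ (x 1) * ωH M a]

/-- Triples (n_t, n_φ, n_Q) with n_t + n_φ + 2 n_Q ≤ n, indexing ∪_{i ≤ n} 𝕊_i. -/
def symTriples (n : ℕ) : Finset (ℕ × ℕ × ℕ) :=
  (Finset.range (n + 1) ×ˢ Finset.range (n + 1) ×ˢ Finset.range (n + 1)).filter
    fun m => m.1 + m.2.1 + 2 * m.2.2 ≤ n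

/-- The symmetry operator ∂_t^{n_t} ∂_φ^{n_φ} Q^{n_Q}. -/
def symOp (a : ℝ) (m : ℕ × ℕ × ℕ) (ψ : V4 → ℝ) : V4 → ℝ :=
  (pd 0)^[m.1] ((pd 3)^[m.2.1] ((carterQ a)^[m.2.2] ψ))

/-- The order-(n+1) energy E^{n+1}_X[ψ](t) = Σ_{i=0}^{n} Σ_{S ∈ 𝕊_i} E_X[Sψ](t). -/
def energyUpTo (M a : ℝ) (X : V4 → Fin 4 → ℝ) (n : ℕ) (ψ : V4 → ℝ) (t : ℝ) : ℝ :=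
  ∑ m ∈ symTriples n, energy M a X (symOp a m ψ) t

/-- The pointwise norm ‖ψ‖_n². -/
def ptNormSq (a : ℝ) (n : ℕ) (ψ : V4 → ℝ) : V4 → ℝ :=
  fun x => ∑ m ∈ symTriples n, (symOp a m ψ x) ^ 2

/-- The pointwise norm ‖∇̸ψ‖_n². -/
def angNormSq (a : ℝ) (n : ℕ) (ψ : V4 → ℝ) : V4 → ℝ :=
  fun x => ∑ m ∈ symTriples n,
    ((pd 2 (symOp a m ψ) x) ^ 2 + (Real.sin (x 2) ^ 2)⁻¹ * (pd 3 (symOp a m ψ) x) ^ 2)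

def energyIntegrable (M a : ℝ) (X : V4 → Fin 4 → ℝ) (ψ : V4 → ℝ) (t : ℝ) : Prop :=
  IntegrableOn (fun p => momentum M a X ψ 0 (pt t p) * Real.sin p.2.1) (sliceSet M a)

def energyFiniteUpTo (M a : ℝ) (X : V4 → Fin 4 → ℝ) (n : ℕ) (ψ : V4 → ℝ) : Prop :=
  ∀ t : ℝ, ∀ m ∈ symTriples n, energyIntegrable M a X (symOp a m ψ) t

/-! Transformed (tortoise-coordinate) quantities. -/

/-- Tortoise coordinate: dr/dr_* = Δ/(r²+a²), r_*(3M) = 0. -/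
def rstar (M a r : ℝ) : ℝ := ∫ s in (3 * M)..r, (s ^ 2 + a ^ 2) / Δk M a s

/-- Ñ² where Ñ⁻² = 1 − a² sin²θ Δ/(r²+a²)². -/
def Ntilde2 (M a r θ : ℝ) : ℝ :=
  (1 - a ^ 2 * Real.sin θ ^ 2 * Δk M a r / (r ^ 2 + a ^ 2) ^ 2)⁻¹

def VQ (M a r : ℝ) : ℝ := Δk M a r / (r ^ 2 + a ^ 2) ^ 2

/-- The potential V of the transformed wave equation. -/
def Vpot (M a r : ℝ) : ℝ :=
  Δk M a r * (2 * M * r ^ 3 + r ^ 2 * a ^ 2 - 4 * M * r * a ^ 2 + a ^ 4) / (r ^ 2 + a ^ 2) ^ 4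

/-- Partial derivatives in the (t, r_*, θ, φ) coordinates, acting on functions
parameterized by BL coordinates; ∂_{r_*} = (Δ/(r²+a²)) ∂_r. -/
def tpd (M a : ℝ) (i : Fin 4) (u : V4 → ℝ) : V4 → ℝ :=
  fun x => if i = 1 then Δk M a (x 1) / (x 1 ^ 2 + a ^ 2) * pd 1 u x else pd i u x

/-- G̃^{αβ} = (ΣΔ/(r²+a²)²) g^{αβ} in (t, r_*, θ, φ) coordinates. -/
def Gtilde (M a r θ : ℝ) : Matrix (Fin 4) (Fin 4) ℝ :=
  !![-(PiK M a r θ) / (r ^ 2 + a ^ 2) ^ 2, 0, 0, -(2 * a * M * r) / (r ^ 2 + a ^ 2) ^ 2;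
     0, 1, 0, 0;
     0, 0, VQ M a r, 0;
     -(2 * a * M * r) / (r ^ 2 + a ^ 2) ^ 2, 0, 0,
       (Δk M a r - a ^ 2 * Real.sin θ ^ 2) / ((r ^ 2 + a ^ 2) ^ 2 * Real.sin θ ^ 2)]

/-- The transformed momentum P̃^α_{(X,q)}[ũ]. -/
def tmomentum (M a : ℝ) (X : V4 → Fin 4 → ℝ) (q : V4 → ℝ) (u : V4 → ℝ) (α : Fin 4) :
    V4 → ℝ :=
  fun x =>
    -(∑ γ, Gtilde M a (x 1) (x 2) α γ * tpd M a γ u x) * (∑ β, tpd M a β u x * X x β) +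
      (1 / 2) * X x α *
        ((∑ ρ, ∑ σ, Gtilde M a (x 1) (x 2) ρ σ * tpd M a ρ u x * tpd M a σ u x) +
          Vpot M a (x 1) * u x ^ 2) +
      ∑ β, Gtilde M a (x 1) (x 2) α β *
        (-(q x) * tpd M a β u x * u x + (1 / 2) * tpd M a β q x * u x ^ 2)

/-- The transformed energy Ẽ_{(X,q)}[ũ](t) = ∫ P̃^t sinθ dr_* dθ dφ (as an r-integral). -/
def tenergy (M a : ℝ) (X : V4 → Fin 4 → ℝ) (q : V4 → ℝ) (u : V4 → ℝ) (t : ℝ) : ℝ :=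
  ∫ p in sliceSet M a,
    tmomentum M a X q u 0 (pt t p) * Real.sin p.2.1 * ((p.1 ^ 2 + a ^ 2) / Δk M a p.1)

def zeroFn : V4 → ℝ := fun _ => 0

def tenergyUpTo (M a : ℝ) (X : V4 → Fin 4 → ℝ) (q : V4 → ℝ) (n : ℕ) (u : V4 → ℝ)
    (t : ℝ) : ℝ :=
  ∑ m ∈ symTriples n, tenergy M a X q (symOp a m u) t

def tenergyIntegrable (M a : ℝ) (X : V4 → Fin 4 → ℝ) (q : V4 → ℝ) (u : V4 → ℝ)
    (t : ℝ) : Prop :=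
  IntegrableOn
    (fun p => tmomentum M a X q u 0 (pt t p) * Real.sin p.2.1 * ((p.1 ^ 2 + a ^ 2) / Δk M a p.1))
    (sliceSet M a)

def tenergyFiniteUpTo (M a : ℝ) (X : V4 → Fin 4 → ℝ) (q : V4 → ℝ) (n : ℕ)
    (u : V4 → ℝ) : Prop :=
  ∀ t : ℝ, ∀ m ∈ symTriples n, tenergyIntegrable M a X q (symOp a m u) t

/-- The vector field K = (t² + r_*² + 1) T_χ + 2 t r_* Ñ² ∂_{r_*}, in tilde coordinates. -/
def Kvec (M a : ℝ) (χ : ℝ → ℝ) : V4 → Fin 4 → ℝ :=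
  fun x =>
    ![x 0 ^ 2 + rstar M a (x 1) ^ 2 + 1,
      2 * x 0 * rstar M a (x 1) * Ntilde2 M a (x 1) (x 2),
      0,
      (x 0 ^ 2 + rstar M a (x 1) ^ 2 + 1) * (χ (x 1) * ωH M a)]

def qK (M a : ℝ) : V4 → ℝ := fun x => x 0 * (Ntilde2 M a (x 1) (x 2) - 1)

/-- T_⊥ = ∂_t + (2aMr/Π) ∂_φ. -/
def Tperp (M a : ℝ) : V4 → Fin 4 → ℝ :=
  fun x => ![1, 0, 0, 2 * a * M * x 1 / PiK M a (x 1) (x 2)]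

/-- The future unit normal n = (Π/(ΣΔ))^{1/2} T_⊥ of the constant-t slices. -/
def normalVF (M a : ℝ) : V4 → Fin 4 → ℝ :=
  fun x i =>
    Real.sqrt (PiK M a (x 1) (x 2) / (SigK a (x 1) (x 2) * Δk M a (x 1))) * Tperp M a x i

/-- ũ = √(r² + a²) ψ. -/
def utilde (a : ℝ) (ψ : V4 → ℝ) : V4 → ℝ := fun x => Real.sqrt (x 1 ^ 2 + a ^ 2) * ψ x

/-- The transformed wave operator ∂_{r_*}² + (r²+a²)⁻² ℛ − V. -/
def tbox (M a : ℝ) (u : V4 → ℝ) : V4 → ℝ :=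
  fun x =>
    tpd M a 1 (tpd M a 1 u) x + ((x 1 ^ 2 + a ^ 2) ^ 2)⁻¹ * curlyR M a u x -
      Vpot M a (x 1) * u x

def IsTWaveSol (M a : ℝ) (u : V4 → ℝ) : Prop :=
  ContDiffOn ℝ (⊤ : ℕ∞) u (ext M a) ∧ ∀ x ∈ ext M a, tbox M a u x = 0

/-- The Kerr metric (lower indices) in BL coordinates. -/
def gBL (M a r θ : ℝ) : Matrix (Fin 4) (Fin 4) ℝ :=
  !![-(1 - 2 * M * r / SigK a r θ), 0, 0, -(2 * a * M * r * Real.sin θ ^ 2 / SigK a r θ);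
     0, SigK a r θ / Δk M a r, 0, 0;
     0, 0, SigK a r θ, 0;
     -(2 * a * M * r * Real.sin θ ^ 2 / SigK a r θ), 0, 0,
       PiK M a r θ * Real.sin θ ^ 2 / SigK a r θ]

/-- The Kerr metric (lower indices) in (t, r_*, θ, φ) coordinates. -/
def gTl (M a r θ : ℝ) : Matrix (Fin 4) (Fin 4) ℝ :=
  !![-(1 - 2 * M * r / SigK a r θ), 0, 0, -(2 * a * M * r * Real.sin θ ^ 2 / SigK a r θ);
     0, SigK a r θ * Δk M a r / (r ^ 2 + a ^ 2) ^ 2, 0, 0;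
     0, 0, SigK a r θ, 0;
     -(2 * a * M * r * Real.sin θ ^ 2 / SigK a r θ), 0, 0,
       PiK M a r θ * Real.sin θ ^ 2 / SigK a r θ]

def quadForm (g : Matrix (Fin 4) (Fin 4) ℝ) (X Y : Fin 4 → ℝ) : ℝ :=
  ∑ i, ∑ j, g i j * X i * Y j

/-! Null geodesics. -/

def gBLinv (M a r θ : ℝ) : Matrix (Fin 4) (Fin 4) ℝ := (SigK a r θ)⁻¹ • Ginv M a r θ

def vel (γ : ℝ → V4) (s : ℝ) (i : Fin 4) : ℝ := deriv (fun u => γ u i) s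

def christoffel (M a : ℝ) (x : V4) (k i j : Fin 4) : ℝ :=
  (1 / 2) * ∑ l, gBLinv M a (x 1) (x 2) k l *
    (pd i (fun y => gBL M a (y 1) (y 2) l j) x + pd j (fun y => gBL M a (y 1) (y 2) l i) x -
      pd l (fun y => gBL M a (y 1) (y 2) i j) x)

/-- r admits an orbiting null geodesic: there is a (nonconstant) null geodesic of the Kerr
metric remaining at that constant value of r in the exterior region. -/
def IsOrbitingNullGeodesicRadius (M a r : ℝ) : Prop :=
  ∃ γ : ℝ → V4,
    (∀ i, ContDiff ℝ (⊤ : ℕ∞) fun s => γ s i) ∧ (∀ s, γ s ∈ ext M a) ∧ (∀ s, γ s 1 = r) ∧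
      (∃ s i, vel γ s i ≠ 0) ∧
      (∀ s, quadForm (gBL M a (γ s 1) (γ s 2)) (vel γ s) (vel γ s) = 0) ∧
      ∀ s k, deriv (fun u => vel γ u k) s +
        ∑ i, ∑ j, christoffel M a (γ s) k i j * vel γ s i * vel γ s j = 0

/-! Morawetz (symmetry-indexed) quantities. -/

/-- Coefficients ℛ^a of ℛ in the basis 𝕊₂ = {∂_t², ∂_t∂_φ, ∂_φ², Q}. -/
def Rcoef (M a r : ℝ) : Fin 4 → ℝ :=
  ![-((r ^ 2 + a ^ 2) ^ 2), -(4 * a * M * r), Δk M a r - a ^ 2, Δk M a r]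

/-- Coefficients ℒ^a of ℒ = ∂_t² + ∂_φ² + Q in the basis 𝕊₂. -/
def Lcoef : Fin 4 → ℝ := ![1, 0, 1, 1]

/-- The second-order symmetry operators S_a ∈ 𝕊₂. -/
def symS (a : ℝ) (c : Fin 4) (ψ : V4 → ℝ) : V4 → ℝ :=
  if c = 0 then pd 0 (pd 0 ψ)
  else if c = 1 then pd 0 (pd 3 ψ)
  else if c = 2 then pd 3 (pd 3 ψ)
  else carterQ a ψ

/-- The coefficient matrices S_a^{αβ} with S_a = μ⁻¹ ∂_α (μ S_a^{αβ} ∂_β). -/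
def Smat (a : ℝ) (c : Fin 4) (θ : ℝ) : Matrix (Fin 4) (Fin 4) ℝ :=
  if c = 0 then !![1, 0, 0, 0; 0, 0, 0, 0; 0, 0, 0, 0; 0, 0, 0, 0]
  else if c = 1 then !![0, 0, 0, 1 / 2; 0, 0, 0, 0; 0, 0, 0, 0; 1 / 2, 0, 0, 0]
  else if c = 2 then !![0, 0, 0, 0; 0, 0, 0, 0; 0, 0, 0, 0; 0, 0, 0, 1]
  else
    !![a ^ 2 * Real.sin θ ^ 2, 0, 0, 0; 0, 0, 0, 0; 0, 0, 1, 0;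
       0, 0, 0, Real.cos θ ^ 2 / Real.sin θ ^ 2]

/-- ℒ^{αβ} = Σ_c ℒ^c S_c^{αβ}. -/
def Lmat (a : ℝ) (θ : ℝ) : Matrix (Fin 4) (Fin 4) ℝ :=
  fun α β => ∑ c, Lcoef c * Smat a c θ α β

/-- ℛ̃′^a = ∂_r (z₁ Δ⁻¹ ℛ^a). -/
def Rtp (M a : ℝ) (z₁ : ℝ → ℝ) (c : Fin 4) (r : ℝ) : ℝ :=
  deriv (fun s => z₁ s * (Δk M a s)⁻¹ * Rcoef M a s c) r

/-- ℛ̃̃″^a = ∂_r (z₂ z₁^{1/2} Δ^{−1/2} ℛ̃′^a). -/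
def Rtpp (M a : ℝ) (z₁ z₂ : ℝ → ℝ) (c : Fin 4) (r : ℝ) : ℝ :=
  deriv (fun s => z₂ s * Real.sqrt (z₁ s) * (Real.sqrt (Δk M a s))⁻¹ * Rtp M a z₁ c s) r

/-- 𝒜^a = z₁^{1/2} Δ^{3/2} (−ℛ̃̃″^a). -/
def Acoef (M a : ℝ) (z₁ z₂ : ℝ → ℝ) (c : Fin 4) (r : ℝ) : ℝ :=
  Real.sqrt (z₁ r) * (Δk M a r * Real.sqrt (Δk M a r)) * (-(Rtpp M a z₁ z₂ c r))

/-- 𝒰^{cd} = (1/2) z₂ ℛ̃′^c ℛ̃′^d. -/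
def Ucoef (M a : ℝ) (z₁ z₂ : ℝ → ℝ) (c d : Fin 4) (r : ℝ) : ℝ :=
  (1 / 2) * z₂ r * Rtp M a z₁ c r * Rtp M a z₁ d r

/-- 𝒱^a = (1/4) ∂_r (Δ ∂_r (z₁ ∂_r (z₂ ℛ̃′^a))). -/
def Vcoef (M a : ℝ) (z₁ z₂ : ℝ → ℝ) (c : Fin 4) (r : ℝ) : ℝ :=
  (1 / 4) *
    deriv (fun s =>
      Δk M a s * deriv (fun w => z₁ w * deriv (fun v => z₂ v * Rtp M a z₁ c v) w) s) r

/-- The r-component of the Morawetz vector field A^{ab} = z₁ z₂ ℛ̃′^{(a} ℒ^{b)} ∂_r. -/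
def AvecR (M a : ℝ) (z₁ z₂ : ℝ → ℝ) (i j : Fin 4) (r : ℝ) : ℝ :=
  z₁ r * z₂ r * ((1 / 2) * (Rtp M a z₁ i r * Lcoef j + Rtp M a z₁ j r * Lcoef i))

/-- The Morawetz scalars q_A^{ab}. -/
def qA (M a : ℝ) (z₁ z₂ : ℝ → ℝ) (i j : Fin 4) (r : ℝ) : ℝ :=
  (1 / 2) * deriv (AvecR M a z₁ z₂ i j) r -
    (1 / 2) * deriv z₁ r * z₂ r *
      ((1 / 2) * (Rtp M a z₁ i r * Lcoef j + Rtp M a z₁ j r * Lcoef i))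

/-- The symmetry-indexed Morawetz momentum P_A^α[ψ]. -/
def morMomentum (M a : ℝ) (z₁ z₂ : ℝ → ℝ) (ψ : V4 → ℝ) (α : Fin 4) : V4 → ℝ :=
  fun x => ∑ i, ∑ j,
    (-(∑ γ, Ginv M a (x 1) (x 2) α γ * pd γ (symS a i ψ) x) * pd 1 (symS a j ψ) x *
        AvecR M a z₁ z₂ i j (x 1) +
      (1 / 2) * (if α = 1 then AvecR M a z₁ z₂ i j (x 1) else 0) *
        (∑ ρ, ∑ σ, Ginv M a (x 1) (x 2) ρ σ * pd ρ (symS a i ψ) x * pd σ (symS a j ψ) x) +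
      ∑ β, Ginv M a (x 1) (x 2) α β *
        (-(qA M a z₁ z₂ i j (x 1)) * pd β (symS a i ψ) x * symS a j ψ x +
          (1 / 2) * pd β (fun y => qA M a z₁ z₂ i j (y 1)) x * symS a i ψ x * symS a j ψ x))

/-- The first boundary current P∂₁^α[ψ]. -/
def morBoundary1 (M a : ℝ) (z₁ z₂ : ℝ → ℝ) (ψ : V4 → ℝ) (α : Fin 4) : V4 → ℝ :=
  fun x => ∑ i, ∑ j, ∑ β,
    (Ucoef M a z₁ z₂ i j (x 1) * Lmat a (x 2) α β -
        ∑ c, (1 / 2) *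
          (Ucoef M a z₁ z₂ c i (x 1) * Lcoef j + Ucoef M a z₁ z₂ c j (x 1) * Lcoef i) *
          Smat a c (x 2) α β) *
      symS a i ψ x * pd β (symS a j ψ) x

/-! Surface energies. -/

def pdR (f : ℝ × ℝ × ℝ → ℝ) (p : ℝ × ℝ × ℝ) : ℝ := deriv (fun s => f (s, p.2)) p.1

def pdTh (f : ℝ × ℝ × ℝ → ℝ) (p : ℝ × ℝ × ℝ) : ℝ :=
  deriv (fun s => f (p.1, s, p.2.2)) p.2.1

def pdPh (f : ℝ × ℝ × ℝ → ℝ) (p : ℝ × ℝ × ℝ) : ℝ :=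
  deriv (fun s => f (p.1, p.2.1, s)) p.2.2

/-- Flux of the transformed momentum through the graph t = f(r_*, θ, φ)
(f given as a function of (r, θ, φ), with ∂_{r_*} f = (Δ/(r²+a²)) ∂_r f). -/
def tsurfEnergy (M a : ℝ) (X : V4 → Fin 4 → ℝ) (q : V4 → ℝ) (u : V4 → ℝ)
    (f : ℝ × ℝ × ℝ → ℝ) : ℝ :=
  ∫ p in sliceSet M a,
    (tmomentum M a X q u 0 (pt (f p) p) -
        Δk M a p.1 / (p.1 ^ 2 + a ^ 2) * pdR f p * tmomentum M a X q u 1 (pt (f p) p) -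
        pdTh f p * tmomentum M a X q u 2 (pt (f p) p) -
        pdPh f p * tmomentum M a X q u 3 (pt (f p) p)) *
      Real.sin p.2.1 * ((p.1 ^ 2 + a ^ 2) / Δk M a p.1)

def tsurfEnergyIntegrable (M a : ℝ) (X : V4 → Fin 4 → ℝ) (q : V4 → ℝ) (u : V4 → ℝ)
    (f : ℝ × ℝ × ℝ → ℝ) : Prop :=
  IntegrableOn
    (fun p =>
      (tmomentum M a X q u 0 (pt (f p) p) -
          Δk M a p.1 / (p.1 ^ 2 + a ^ 2) * pdR f p * tmomentum M a X q u 1 (pt (f p) p) -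
          pdTh f p * tmomentum M a X q u 2 (pt (f p) p) -
          pdPh f p * tmomentum M a X q u 3 (pt (f p) p)) *
        Real.sin p.2.1 * ((p.1 ^ 2 + a ^ 2) / Δk M a p.1))
    (sliceSet M a)


/-- The vector field K = (t² + r_*² + 1) T_χ + 2 t r_* Ñ² ∂_{r_*}, expressed in
Boyer–Lindquist components (∂_{r_*} = (Δ/(r²+a²)) ∂_r). -/
def KvecBL (M a : ℝ) (χ : ℝ → ℝ) : V4 → Fin 4 → ℝ :=
  fun x =>
    ![x 0 ^ 2 + rstar M a (x 1) ^ 2 + 1,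
      2 * x 0 * rstar M a (x 1) * Ntilde2 M a (x 1) (x 2) * (Δk M a (x 1) / (x 1 ^ 2 + a ^ 2)),
      0,
      (x 0 ^ 2 + rstar M a (x 1) ^ 2 + 1) * (χ (x 1) * ωH M a)]

/-! ### The horizon radius and the function Δ for slow rotation -/

/-- For `|a| ≤ M/2` the outer root `r₊` of `Δ` lies in `[7M/4, 2M]`, so the inner root
`2M - r₊` stays in `[0, M/4]`, uniformly away from the exterior. -/
lemma rplus_facts {M a : ℝ} (hM : 0 < M) (ha : |a| ≤ M / 2) :
    7 / 4 * M ≤ rplus M a ∧ rplus M a ≤ 2 * M ∧ rplus M a ^ 2 + a ^ 2 = 2 * M * rplus M a := by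
  have ha2 : a ^ 2 ≤ (M / 2) ^ 2 := by
    rw [← sq_abs a]; gcongr
  have h0 : 0 ≤ M ^ 2 - a ^ 2 := by nlinarith
  have hs := Real.sq_sqrt h0
  have h1 : 3 / 4 * M ≤ Real.sqrt (M ^ 2 - a ^ 2) := by
    apply Real.le_sqrt_of_sq_le; nlinarith
  have h2 : Real.sqrt (M ^ 2 - a ^ 2) ≤ M := by
    rw [Real.sqrt_le_left hM.le]; nlinarith [sq_nonneg a]
  unfold rplus
  refine ⟨by linarith, by linarith, by nlinarith⟩

lemma Δk_factor {M a p : ℝ} (hp : p ^ 2 + a ^ 2 = 2 * M * p) (r : ℝ) :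
    Δk M a r = (r - p) * (r - (2 * M - p)) := by
  unfold Δk; linear_combination hp

/-! ### Growth of the tortoise coordinate -/

lemma integrand_bound {M a p s : ℝ} (hM : 0 < M) (ha : |a| ≤ M / 2)
    (h1 : 7 / 4 * M ≤ p) (hp : p ^ 2 + a ^ 2 = 2 * M * p) (hs : p < s) :
    ‖(s ^ 2 + a ^ 2) / Δk M a s‖ ≤ 3 * s / (s - p) := by
  have ha2 : a ^ 2 ≤ (M / 2) ^ 2 := by
    rw [← sq_abs a]; gcongr
  have hsp : 0 < s - p := by linarith
  have hq : 3 / 4 * s ≤ s - (2 * M - p) := by linarith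
  have hs0 : 0 < s := by linarith
  have hq0 : 0 < s - (2 * M - p) := by linarith
  rw [Δk_factor hp, Real.norm_of_nonneg (by positivity), div_le_div_iff₀ (by positivity) hsp]
  have : s ^ 2 + a ^ 2 ≤ 3 * s * (s - (2 * M - p)) := by nlinarith
  nlinarith

/-- The tortoise coordinate grows linearly at infinity and only logarithmically at the horizon;
the single bound below, uniform in `a`, covers both ends. -/
lemma rstar_bound {M a p r : ℝ} (hM : 0 < M) (ha : |a| ≤ M / 2)
    (h1 : 7 / 4 * M ≤ p) (h2 : p ≤ 2 * M) (hp : p ^ 2 + a ^ 2 = 2 * M * p) (hr : p < r) :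
    rstar M a r ^ 2 * (r - p) ≤ 648 * r ^ 3 := by
  have hr0 : 0 < r := by linarith
  have hrp : 0 < r - p := by linarith
  rcases le_total (3 * M) r with h | h
  · have hb : ‖rstar M a r‖ ≤ 9 * |r - 3 * M| := by
      apply intervalIntegral.norm_integral_le_of_norm_le_const
      intro s hs
      rw [Set.uIoc_of_le h] at hs
      refine (integrand_bound hM ha h1 hp (by linarith [hs.1])).trans ?_
      rw [div_le_iff₀ (by linarith [hs.1])]
      linarith [hs.1]
    rw [abs_of_nonneg (by linarith)] at hb
    have hsq : rstar M a r ^ 2 ≤ (9 * r) ^ 2 := by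
      apply sq_le_sq'
      · linarith [neg_abs_le (rstar M a r), Real.norm_eq_abs (rstar M a r)]
      · linarith [le_abs_self (rstar M a r), Real.norm_eq_abs (rstar M a r)]
    calc rstar M a r ^ 2 * (r - p) ≤ (9 * r) ^ 2 * r := by
          gcongr; linarith
      _ ≤ 648 * r ^ 3 := by nlinarith [pow_pos hr0 3]
  · -- Compare with `9M/(s - p)` and use `log x ≤ 2 √x`.
    have hint : IntervalIntegrable (fun s => 9 * M * (s - p)⁻¹) volume r (3 * M) := by
      apply ContinuousOn.intervalIntegrable
      rw [Set.uIcc_of_le h]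
      intro s hs
      have : s - p ≠ 0 := by linarith [hs.1]
      fun_prop (disch := assumption)
    have hb : ‖∫ s in r..(3 * M), (s ^ 2 + a ^ 2) / Δk M a s‖
        ≤ ∫ s in r..(3 * M), 9 * M * (s - p)⁻¹ := by
      refine intervalIntegral.norm_integral_le_of_norm_le h (Eventually.of_forall ?_) hint
      intro s hs
      have hsp : 0 < s - p := by linarith [hs.1]
      refine (integrand_bound hM ha h1 hp (by linarith [hs.1])).trans ?_
      rw [div_eq_mul_inv]
      have : 3 * s ≤ 9 * M := by linarith [hs.2]
      gcongr
    have h3 : 0 < 3 * M - p := by linarith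
    rw [intervalIntegral.integral_const_mul,
      intervalIntegral.integral_comp_sub_right (fun x => x⁻¹) p,
      integral_inv_of_pos hrp h3, Real.norm_eq_abs] at hb
    have hy : 0 < (3 * M - p) / (r - p) := by positivity
    set y := (3 * M - p) / (r - p) with hydef
    have hlog : Real.log y ≤ 2 * Real.sqrt y := by
      have := Real.log_le_sub_one_of_pos (Real.sqrt_pos.2 hy)
      rw [Real.log_sqrt hy.le] at this
      linarith
    have hb' : |rstar M a r| ≤ 18 * M * Real.sqrt y := by
      unfold rstar
      rw [intervalIntegral.integral_symm, abs_neg]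
      nlinarith
    have hsq : rstar M a r ^ 2 ≤ (18 * M) ^ 2 * y := by
      rw [← sq_abs, ← Real.sq_sqrt hy.le, ← mul_pow]
      gcongr
    calc rstar M a r ^ 2 * (r - p) ≤ (18 * M) ^ 2 * y * (r - p) := by gcongr
      _ = (18 * M) ^ 2 * (3 * M - p) := by rw [hydef]; field_simp
      _ ≤ 648 * M ^ 3 := by nlinarith [pow_pos hM 2]
      _ ≤ 648 * r ^ 3 := by gcongr; linarith

/-! ### The angular velocity mismatch -/

/-- Up to the factor `a`, the left side is `Π (χ ω_H - ω)` with `ω = 2aMr/Π` the angular velocity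
of `T_⊥`. It vanishes linearly at the horizon because `χ = 1` and `ω = ω_H` there. -/
lemma mismatch_bound {M a p r θ c : ℝ} (hM : 0 < M) (ha : |a| ≤ M / 2)
    (h1 : 7 / 4 * M ≤ p) (h2 : p ≤ 2 * M) (hp : p ^ 2 + a ^ 2 = 2 * M * p) (hr : p < r)
    (hc0 : 0 ≤ c) (hc1 : c ≤ 1) (hin : r ≤ 10 * M → c = 1) (hout : 11 * M ≤ r → c = 0) :
    |c * (PiK M a r θ / (2 * M * p)) - 2 * M * r| ≤ 800 * (r * (r - p)) := by
  have hr0 : 0 < r := by linarith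
  have hrp : 0 < r - p := by linarith
  have hp0 : 0 < p := by linarith
  have ha2 : a ^ 2 ≤ (M / 2) ^ 2 := by
    rw [← sq_abs a]; gcongr
  have har : a ^ 2 ≤ r ^ 2 := by nlinarith
  have hpos : 0 < r * (r - p) := by positivity
  have hfar : 10 * M ≤ r → 2 * M * r ≤ r * (r - p) := by intro h; nlinarith
  rcases le_total (11 * M) r with h | h
  · have := hfar (by linarith)
    rw [hout h, zero_mul, zero_sub, abs_neg, abs_of_pos (by positivity)]
    linarith
  -- The mismatch with `c = 1`, as a difference of two multiples of `r - p`.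
  have hD : |PiK M a r θ / (2 * M * p) - 2 * M * r| ≤ 800 * (r * (r - p)) := by
    have hq0 : 0 < r - (2 * M - p) := by linarith
    have hs1 : Real.sin θ ^ 2 ≤ 1 := Real.sin_sq_le_one θ
    have hs0 : 0 ≤ Real.sin θ ^ 2 := sq_nonneg _
    have hu : a ^ 2 * Real.sin θ ^ 2 * (r - (2 * M - p)) ≤ r ^ 3 := by
      calc a ^ 2 * Real.sin θ ^ 2 * (r - (2 * M - p)) ≤ r ^ 2 * 1 * r := by
            gcongr
            linarith
        _ = r ^ 3 := by ring
    have hl : 0 ≤ a ^ 2 * Real.sin θ ^ 2 * (r - (2 * M - p)) := by positivity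
    have hid : PiK M a r θ - 2 * M * r * (2 * M * p) =
        (r - p) * ((r + p) * (r ^ 2 + p ^ 2 + 2 * a ^ 2) - 4 * M ^ 2 * p
          - a ^ 2 * Real.sin θ ^ 2 * (r - (2 * M - p))) := by
      unfold PiK
      rw [Δk_factor hp]
      linear_combination (p ^ 2 + a ^ 2 + 2 * M * p) * hp
    have h4 : 4 * M ^ 2 * p ≤ 4 * r ^ 3 := by
      calc 4 * M ^ 2 * p ≤ 4 * r ^ 2 * r := by gcongr; linarith
        _ = 4 * r ^ 3 := by ring
    have h4' : 0 ≤ 4 * M ^ 2 * p := by positivity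
    have h5 : (r + p) * (r ^ 2 + p ^ 2 + 2 * a ^ 2) ≤ 8 * r ^ 3 := by
      calc (r + p) * (r ^ 2 + p ^ 2 + 2 * a ^ 2) ≤ (r + r) * (r ^ 2 + r ^ 2 + 2 * r ^ 2) := by
            gcongr
        _ = 8 * r ^ 3 := by ring
    have h5' : 0 ≤ (r + p) * (r ^ 2 + p ^ 2 + 2 * a ^ 2) := by positivity
    have hR : 0 < r ^ 3 := by positivity
    have habs : |(r + p) * (r ^ 2 + p ^ 2 + 2 * a ^ 2) - 4 * M ^ 2 * p
          - a ^ 2 * Real.sin θ ^ 2 * (r - (2 * M - p))| ≤ 13 * r ^ 3 := by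
      rw [abs_le]; constructor <;> linarith
    have hMp : 0 < 2 * M * p := by positivity
    rw [show PiK M a r θ / (2 * M * p) - 2 * M * r
        = (PiK M a r θ - 2 * M * r * (2 * M * p)) / (2 * M * p) by field_simp,
      hid, abs_div, abs_of_pos hMp, div_le_iff₀ hMp, abs_mul, abs_of_pos hrp]
    have hr2 : r ^ 2 ≤ 121 * M ^ 2 := by nlinarith
    have hMp' : 2 * M ^ 2 ≤ 2 * M * p := by nlinarith
    have : 13 * r ^ 3 ≤ 800 * r * (2 * M * p) := by
      calc 13 * r ^ 3 = 13 * r * r ^ 2 := by ring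
        _ ≤ 13 * r * (121 * M ^ 2) := by gcongr
        _ ≤ 800 * r * (2 * M ^ 2) := by nlinarith [mul_pos hr0 (pow_pos hM 2)]
        _ ≤ 800 * r * (2 * M * p) := by gcongr
    calc (r - p) * _ ≤ (r - p) * (13 * r ^ 3) := by gcongr
      _ ≤ (r - p) * (800 * r * (2 * M * p)) := by gcongr
      _ = _ := by ring
  rcases le_total r (10 * M) with h' | h'
  · rw [hin h', one_mul]; exact hD
  · have hf := hfar h'
    have hMr : 0 < 2 * M * r := by positivity
    rw [abs_le] at hD ⊢
    -- The mismatch is the convex combination of its values at `c = 1` and `c = 0`.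
    have e : c * (PiK M a r θ / (2 * M * p)) - 2 * M * r
        = c * (PiK M a r θ / (2 * M * p) - 2 * M * r) + (1 - c) * (-(2 * M * r)) := by ring
    rw [e]
    constructor <;> nlinarith [mul_le_mul_of_nonneg_left hD.1 hc0,
      mul_le_mul_of_nonneg_left hD.2 hc0, mul_nonneg (sub_nonneg.2 hc1) hMr.le,
      mul_le_mul_of_nonneg_left hf (sub_nonneg.2 hc1)]

/-! ### The algebraic criterion and the conclusion -/

lemma PiK_lower {M a r θ : ℝ} (hM : 0 < M) (hr : 0 < r) : r ^ 4 ≤ PiK M a r θ := by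
  have hD : Δk M a r ≤ r ^ 2 + a ^ 2 := by
    unfold Δk; nlinarith [mul_pos hM hr]
  have h2 : a ^ 2 * Real.sin θ ^ 2 * Δk M a r ≤ a ^ 2 * (r ^ 2 + a ^ 2) := by
    calc a ^ 2 * Real.sin θ ^ 2 * Δk M a r
        ≤ a ^ 2 * Real.sin θ ^ 2 * (r ^ 2 + a ^ 2) := by gcongr
      _ ≤ a ^ 2 * 1 * (r ^ 2 + a ^ 2) := by gcongr; exact Real.sin_sq_le_one θ
      _ = _ := by ring
  unfold PiK
  nlinarith [mul_nonneg (sq_nonneg a) (sq_nonneg r)]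

/-- With `A = t² + ρ² + 1` and `B = 2tρ` one has `B²(ρ² + 1) ≤ A²ρ²` for every `t`, so positivity
of `A²(1 - ε) - B²N` follows from a condition free of `t`. -/
lemma criterion {t ρ N ε : ℝ} (hN : 0 ≤ N) (h : ρ ^ 2 * (N - 1) + ε * (ρ ^ 2 + 1) < 1) :
    0 < (t ^ 2 + ρ ^ 2 + 1) ^ 2 * (1 - ε) - (2 * t * ρ) ^ 2 * N := by
  have hA : 0 < (t ^ 2 + ρ ^ 2 + 1) ^ 2 := by positivity
  have hB : (2 * t * ρ) ^ 2 * (ρ ^ 2 + 1) ≤ (t ^ 2 + ρ ^ 2 + 1) ^ 2 * ρ ^ 2 := by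
    nlinarith [mul_nonneg (sq_nonneg ρ) (sq_nonneg (t ^ 2 - ρ ^ 2 - 1))]
  have h1 : 0 < ρ ^ 2 + 1 := by positivity
  refine (mul_pos_iff_of_pos_left h1).1 ?_
  have := mul_le_mul_of_nonneg_right hB hN
  nlinarith [mul_lt_mul_of_pos_left h hA]

/-- The value of `g(K, K)`, obtained by splitting `T_χ = T_⊥ + (w - ω) ∂_φ` orthogonally with
`w = χ ω_H`, `ω = 2aMr/Π`, and using `Ñ² = (r² + a²)²/Π`. -/
lemma quadForm_K {M a r θ t ρ w : ℝ} (hS : 0 < SigK a r θ) (hD : 0 < Δk M a r)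
    (hP : 0 < PiK M a r θ) (hr : 0 < r) :
    quadForm (gBL M a r θ)
      ![t ^ 2 + ρ ^ 2 + 1, 2 * t * ρ * Ntilde2 M a r θ * (Δk M a r / (r ^ 2 + a ^ 2)), 0,
        (t ^ 2 + ρ ^ 2 + 1) * w]
      ![t ^ 2 + ρ ^ 2 + 1, 2 * t * ρ * Ntilde2 M a r θ * (Δk M a r / (r ^ 2 + a ^ 2)), 0,
        (t ^ 2 + ρ ^ 2 + 1) * w]
    = -(SigK a r θ * Δk M a r / PiK M a r θ) *
      ((t ^ 2 + ρ ^ 2 + 1) ^ 2 *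
          (1 - (w * PiK M a r θ - 2 * a * M * r) ^ 2 * Real.sin θ ^ 2 /
            (SigK a r θ ^ 2 * Δk M a r))
        - (2 * t * ρ) ^ 2 * ((r ^ 2 + a ^ 2) ^ 2 / PiK M a r θ)) := by
  have hR : 0 < r ^ 2 + a ^ 2 := by positivity
  have hN : Ntilde2 M a r θ = (r ^ 2 + a ^ 2) ^ 2 / PiK M a r θ := by
    unfold Ntilde2
    rw [show 1 - a ^ 2 * Real.sin θ ^ 2 * Δk M a r / (r ^ 2 + a ^ 2) ^ 2
      = PiK M a r θ / (r ^ 2 + a ^ 2) ^ 2 by unfold PiK; field_simp, inv_div]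
  -- The determinant of the `(t, φ)` block of the metric.
  have hdet : SigK a r θ ^ 2 * Δk M a r = (SigK a r θ - 2 * M * r) * PiK M a r θ
      + 4 * a ^ 2 * M ^ 2 * r ^ 2 * Real.sin θ ^ 2 := by
    unfold PiK SigK Δk
    rw [Real.cos_sq']
    ring
  have hq : ∀ A C E : ℝ, quadForm (gBL M a r θ) ![A, C, 0, E] ![A, C, 0, E]
      = -(1 - 2 * M * r / SigK a r θ) * A ^ 2
        - 2 * (2 * a * M * r * Real.sin θ ^ 2 / SigK a r θ) * A * E
        + PiK M a r θ * Real.sin θ ^ 2 / SigK a r θ * E ^ 2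
        + SigK a r θ / Δk M a r * C ^ 2 := by
    intro A C E
    simp [quadForm, gBL, Fin.sum_univ_four]
    ring
  rw [hq, hN]
  generalize Real.sin θ ^ 2 = z at *
  generalize SigK a r θ = S at *
  generalize PiK M a r θ = P at *
  generalize Δk M a r = D at *
  generalize t ^ 2 + ρ ^ 2 + 1 = A at *
  field_simp
  linear_combination (A ^ 2 * P) * hdet

/-- The `t`-free condition of `criterion`, with an explicit smallness condition on `a`. -/
lemma small_condition {M a p r θ c ρ : ℝ} (hM : 0 < M)
    (hsmall : a ^ 2 * (10 ^ 9 * (1 + 1 / M ^ 2)) < 1)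
    (h1 : 7 / 4 * M ≤ p) (hp : p ^ 2 + a ^ 2 = 2 * M * p) (hr : p < r)
    (hρ : ρ ^ 2 * (r - p) ≤ 648 * r ^ 3)
    (hc : |c * (PiK M a r θ / (2 * M * p)) - 2 * M * r| ≤ 800 * (r * (r - p))) :
    ρ ^ 2 * ((r ^ 2 + a ^ 2) ^ 2 / PiK M a r θ - 1) +
      (c * (a / (p ^ 2 + a ^ 2)) * PiK M a r θ - 2 * a * M * r) ^ 2 * Real.sin θ ^ 2 /
        (SigK a r θ ^ 2 * Δk M a r) * (ρ ^ 2 + 1) < 1 := by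
  have hr0 : 0 < r := by linarith
  have hrp : 0 < r - p := by linarith
  have hp0 : 0 < p := by linarith
  have hq : 3 / 4 * r ≤ r - (2 * M - p) := by linarith
  have hq0 : 0 < r - (2 * M - p) := by linarith
  have hq2 : r - (2 * M - p) ≤ r := by nlinarith [sq_nonneg a]
  have hPl : r ^ 4 ≤ PiK M a r θ := PiK_lower hM hr0
  have hP : 0 < PiK M a r θ := lt_of_lt_of_le (by positivity) hPl
  have hs1 : Real.sin θ ^ 2 ≤ 1 := Real.sin_sq_le_one θ
  have hs0 : 0 ≤ Real.sin θ ^ 2 := sq_nonneg _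
  have hSl : r ^ 2 ≤ SigK a r θ := by
    unfold SigK; nlinarith [mul_nonneg (sq_nonneg a) (sq_nonneg (Real.cos θ))]
  have first : ρ ^ 2 * ((r ^ 2 + a ^ 2) ^ 2 / PiK M a r θ - 1) ≤ 648 * a ^ 2 := by
    have e : (r ^ 2 + a ^ 2) ^ 2 / PiK M a r θ - 1
        = a ^ 2 * Real.sin θ ^ 2 * Δk M a r / PiK M a r θ := by
      rw [div_sub_one hP.ne']; congr 1; unfold PiK; ring
    rw [e, ← mul_div_assoc, div_le_iff₀ hP, Δk_factor hp]
    calc ρ ^ 2 * (a ^ 2 * Real.sin θ ^ 2 * ((r - p) * (r - (2 * M - p))))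
        = a ^ 2 * Real.sin θ ^ 2 * (ρ ^ 2 * (r - p)) * (r - (2 * M - p)) := by ring
      _ ≤ a ^ 2 * 1 * (648 * r ^ 3) * r := by gcongr
      _ = 648 * a ^ 2 * r ^ 4 := by ring
      _ ≤ _ := by gcongr
  have hρ1 : (ρ ^ 2 + 1) * (r - p) ≤ 648 * (1 + 1 / M ^ 2) * r ^ 3 := by
    have hMr : 1 ≤ 1 / M ^ 2 * r ^ 2 := by
      rw [one_div_mul_eq_div, one_le_div (by positivity)]
      gcongr; linarith
    nlinarith [mul_le_mul_of_nonneg_right hMr hr0.le]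
  have second : (c * (a / (p ^ 2 + a ^ 2)) * PiK M a r θ - 2 * a * M * r) ^ 2 * Real.sin θ ^ 2 /
        (SigK a r θ ^ 2 * Δk M a r) * (ρ ^ 2 + 1)
      ≤ a ^ 2 * (853334 * (648 * (1 + 1 / M ^ 2))) := by
    have e : c * (a / (p ^ 2 + a ^ 2)) * PiK M a r θ - 2 * a * M * r
        = a * (c * (PiK M a r θ / (2 * M * p)) - 2 * M * r) := by
      rw [hp]; ring
    have hsq : (c * (PiK M a r θ / (2 * M * p)) - 2 * M * r) ^ 2 ≤ (800 * (r * (r - p))) ^ 2 := by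
      rw [← sq_abs]; gcongr
    rw [e, Δk_factor hp, mul_pow, div_mul_eq_mul_div]
    have hden : (r ^ 2) ^ 2 * ((r - p) * (3 / 4 * r))
        ≤ SigK a r θ ^ 2 * ((r - p) * (r - (2 * M - p))) := by gcongr
    have hden0 : 0 < (r ^ 2) ^ 2 * ((r - p) * (3 / 4 * r)) := by positivity
    rw [div_le_iff₀ (hden0.trans_le hden)]
    have hL : 0 < 1 + 1 / M ^ 2 := by positivity
    calc a ^ 2 * (c * (PiK M a r θ / (2 * M * p)) - 2 * M * r) ^ 2 * Real.sin θ ^ 2 * (ρ ^ 2 + 1)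
        ≤ a ^ 2 * (800 * (r * (r - p))) ^ 2 * 1 * (ρ ^ 2 + 1) := by gcongr
      _ = a ^ 2 * 640000 * r ^ 2 * (r - p) * ((ρ ^ 2 + 1) * (r - p)) := by ring
      _ ≤ a ^ 2 * 640000 * r ^ 2 * (r - p) * (648 * (1 + 1 / M ^ 2) * r ^ 3) := by gcongr
      _ = a ^ 2 * ((640000 * 4 / 3) * (648 * (1 + 1 / M ^ 2)))
            * ((r ^ 2) ^ 2 * ((r - p) * (3 / 4 * r))) := by ring
      _ ≤ a ^ 2 * (853334 * (648 * (1 + 1 / M ^ 2)))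
            * ((r ^ 2) ^ 2 * ((r - p) * (3 / 4 * r))) := by gcongr; norm_num
      _ ≤ _ := by gcongr
  have hM2 : 0 ≤ 1 / M ^ 2 := by positivity
  nlinarith [sq_nonneg a, mul_nonneg (sq_nonneg a) hM2]

/-- **Lemma 4.5 (The vector field K is timelike).** -/
theorem K_timelike (M : ℝ) (hM : 0 < M) (χ : ℝ → ℝ) (hχ : IsCutoff M χ) :
    ∃ abar : ℝ, 0 < abar ∧ abar ≤ M ∧
      ∀ a : ℝ, |a| < abar →
        ∀ x ∈ ext M a,
          quadForm (gBL M a (x 1) (x 2)) (KvecBL M a χ x) (KvecBL M a χ x) < 0 := by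
  set L : ℝ := 10 ^ 9 * (1 + 1 / M ^ 2) with hL
  have hM2 : 0 < 1 / M ^ 2 := by positivity
  have hL1 : 1 < L := by rw [hL]; nlinarith
  refine ⟨min (M / 2) (1 / L), by positivity, (min_le_left _ _).trans (by linarith), ?_⟩
  intro a ha x hx
  have ha1 : |a| ≤ M / 2 := ha.le.trans (min_le_left _ _)
  have ha2 : |a| * L < 1 := (lt_div_iff₀ (by positivity)).1 (ha.trans_le (min_le_right _ _))
  have hsmall : a ^ 2 * L < 1 := by
    rw [← sq_abs]
    nlinarith [abs_nonneg a]
  obtain ⟨h1, h2, hp⟩ := rplus_facts hM ha1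
  have hr : rplus M a < x 1 := hx.1
  obtain ⟨-, hanti, hin, hout⟩ := hχ
  -- A monotone function equal to 1 on the left and 0 on the right takes values in [0, 1].
  have hc0 : 0 ≤ χ (x 1) := by
    rw [← hout (max (x 1) (11 * M)) (le_max_right _ _)]
    exact hanti (le_max_left _ _)
  have hc1 : χ (x 1) ≤ 1 := by
    rw [← hin (min (x 1) (10 * M)) (min_le_right _ _)]
    exact hanti (min_le_left _ _)
  have hr0 : 0 < x 1 := by linarith
  have hS : 0 < SigK a (x 1) (x 2) := by unfold SigK; positivity
  have hD : 0 < Δk M a (x 1) := by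
    rw [Δk_factor hp]; exact mul_pos (by linarith) (by linarith)
  have hP : 0 < PiK M a (x 1) (x 2) :=
    lt_of_lt_of_le (by positivity) (PiK_lower hM hr0)
  unfold KvecBL
  rw [quadForm_K hS hD hP hr0, neg_mul, neg_lt_zero]
  refine mul_pos (by positivity) (criterion (by positivity) ?_)
  exact small_condition hM hsmall h1 hp hr (rstar_bound hM ha1 h1 h2 hp hr)
    (mismatch_bound hM ha1 h1 h2 hp hr hc0 hc1 (hin _) (hout _))

end KerrPaper
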